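/- Let A ∈ ℝ^{d×d}, B ∈ ℝ^{d×m}, C ∈ ℝ^{k×d}, σ ∈ ℝ^{d×n}, R ∈ ℝ^{m×m} symmetric positive definite, and suppose there exists a symmetric positive semidefinite matrix R̃ ∈ ℝ^{m×m} with B R⁻¹ Bᵀ = σσᵀ + B R̃ Bᵀ. Let S : [0,T] → ℝ^{d×d} be a continuously differentiable symmetric-positive-definite-matrix-valued function satisfying (d/dt)S_t = A S_t + S_t Aᵀ + S_t CᵀC S_t − B R⁻¹ Bᵀ, and let ρ(t,z) := (2π)^{−d/2} (det S_t)^{−1/2} exp(−½ zᵀ S_t⁻¹ z). Then for all t ∈ [0,T] and z ∈ ℝ^d, ∂ρ/∂t (t,z) = −∇_z·( ρ(t,·) ( A(·) + ½ S_t CᵀC (·) ) )(z) − ½ tr( (B R̃ Bᵀ + σσᵀ) ∇_z²ρ(t,z) ); that is, the Fokker–Planck equation of the mean-field process holds with the correction term identically zero and exploration-noise diffusion matrix B R̃ Bᵀ. -/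

import Mathlib

open Matrix

/-- Partial derivative in direction `i`. -/
noncomputable def pd {d : ℕ} (i : Fin d) (f : (Fin d → ℝ) → ℝ) (x : Fin d → ℝ) : ℝ :=
  fderiv ℝ f x (Pi.single i 1)

/-- Spatial gradient. -/
noncomputable def grad {d : ℕ} (f : (Fin d → ℝ) → ℝ) (x : Fin d → ℝ) : Fin d → ℝ :=
  fun i => pd i f x

/-- Spatial Hessian as a matrix. -/
noncomputable def hess {d : ℕ} (f : (Fin d → ℝ) → ℝ) (x : Fin d → ℝ) :
    Matrix (Fin d) (Fin d) ℝ :=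
  Matrix.of fun i j => pd i (fun y => pd j f y) x

/-- Divergence of a vector field. -/
noncomputable def dvg {d : ℕ} (v : (Fin d → ℝ) → (Fin d → ℝ)) (x : Fin d → ℝ) : ℝ :=
  ∑ i, pd i (fun y => v y i) x

/-- Jacobi's formula for the derivative of the determinant along a curve of matrices. -/
theorem hasDerivAt_matrix_det {ι : Type*} [Fintype ι] [DecidableEq ι]
    {S : ℝ → Matrix ι ι ℝ} {S' : Matrix ι ι ℝ} {t : ℝ}
    (hS : ∀ i j, HasDerivAt (fun s => S s i j) (S' i j) t) :
    HasDerivAt (fun s => (S s).det) (((S t).adjugate * S').trace) t := by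
  have hsum : ((S t).adjugate * S').trace =
      ∑ τ : Equiv.Perm ι, ((Equiv.Perm.sign τ : ℤ) : ℝ) *
        ∑ i, (∏ j ∈ Finset.univ.erase i, S t (τ j) j) • S' (τ i) i := by
    have hcol : ∀ i, ((S t).adjugate * S') i i = ((S t).updateCol i fun k => S' k i).det := by
      intro i
      rw [← cramer_apply, cramer_eq_adjugate_mulVec]
      rfl
    simp only [trace, diag_apply, hcol, det_apply', Finset.mul_sum]
    rw [Finset.sum_comm]
    refine Finset.sum_congr rfl fun τ _ => Finset.sum_congr rfl fun i _ => ?_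
    rw [← Finset.mul_prod_erase Finset.univ _ (Finset.mem_univ i), updateCol_self, smul_eq_mul,
      mul_comm (S' (τ i) i)]
    congr 2
    refine Finset.prod_congr rfl fun j hj => ?_
    rw [updateCol_ne (Finset.ne_of_mem_erase hj)]
  simp only [det_apply', hsum]
  exact HasDerivAt.fun_sum fun τ _ =>
    (HasDerivAt.fun_finsetProd fun i _ => hS (τ i) i).const_mul _

open scoped Matrix.Norms.Operator in
/-- Derivative of the inverse along a curve of matrices, entrywise. -/
theorem hasDerivAt_matrix_inv_apply {ι : Type*} [Fintype ι] [DecidableEq ι]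
    {S : ℝ → Matrix ι ι ℝ} {S' : Matrix ι ι ℝ} {t : ℝ}
    (hS : ∀ i j, HasDerivAt (fun s => S s i j) (S' i j) t) (hdet : IsUnit (S t).det) (i j : ι) :
    HasDerivAt (fun s => (S s)⁻¹ i j) ((-((S t)⁻¹ * S' * (S t)⁻¹)) i j) t := by
  have hS₁ : HasDerivAt S S' t := hasDerivAt_pi.2 fun i => hasDerivAt_pi.2 fun j => hS i j
  obtain ⟨u, hu⟩ := (isUnit_iff_isUnit_det _).2 hdet
  have hinv := hasFDerivAt_ringInverse (𝕜 := ℝ) u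
  rw [hu] at hinv
  have h := hinv.comp_hasDerivAt t hS₁
  have hval : ((u⁻¹ : (Matrix ι ι ℝ)ˣ) : Matrix ι ι ℝ) = (S t)⁻¹ := by
    rw [coe_units_inv, hu]
  have h' := hasDerivAt_pi.1 (hasDerivAt_pi.1 h i) j
  simpa [Function.comp_def, ← nonsing_inv_eq_ringInverse, hval] using h'

/-- Derivative in time of a quadratic form with time-dependent coefficients. -/
theorem hasDerivAt_dotProduct_mulVec {ι : Type*} [Fintype ι]
    {P : ℝ → Matrix ι ι ℝ} {P' : Matrix ι ι ℝ} {t : ℝ}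
    (hP : ∀ i j, HasDerivAt (fun s => P s i j) (P' i j) t) (z : ι → ℝ) :
    HasDerivAt (fun s => z ⬝ᵥ P s *ᵥ z) (z ⬝ᵥ P' *ᵥ z) t := by
  simp only [dotProduct, mulVec]
  exact HasDerivAt.fun_sum fun i _ =>
    (HasDerivAt.fun_sum fun j _ => (hP i j).mul_const (z j)).const_mul (z i)

section SpatialDerivatives

variable {d : ℕ}

theorem pd_mul (i : Fin d) {f g : (Fin d → ℝ) → ℝ} {x : Fin d → ℝ}
    (hf : DifferentiableAt ℝ f x) (hg : DifferentiableAt ℝ g x) :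
    pd i (fun y => f y * g y) x = f x * pd i g x + g x * pd i f x := by
  simp [pd, fderiv_fun_mul hf hg]

theorem differentiable_mulVec_apply (M : Matrix (Fin d) (Fin d) ℝ) (j : Fin d) :
    Differentiable ℝ fun y : Fin d → ℝ => (M *ᵥ y) j := by
  simp only [mulVec, dotProduct]
  fun_prop

theorem pd_mulVec_apply (M : Matrix (Fin d) (Fin d) ℝ) (i j : Fin d) (x : Fin d → ℝ) :
    pd i (fun y => (M *ᵥ y) j) x = M j i := by
  have h := ((ContinuousLinearMap.proj (R := ℝ) (φ := fun _ : Fin d => ℝ) j).comp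
    (LinearMap.toContinuousLinearMap (mulVecLin M))).hasFDerivAt (x := x)
  have h' : HasFDerivAt (fun y => (M *ᵥ y) j) _ x := h
  rw [pd, h'.fderiv]
  simp

theorem differentiable_quadraticForm (P : Matrix (Fin d) (Fin d) ℝ) :
    Differentiable ℝ fun y : Fin d → ℝ => y ⬝ᵥ P *ᵥ y := by
  simp only [mulVec, dotProduct]
  fun_prop

theorem pd_quadraticForm {P : Matrix (Fin d) (Fin d) ℝ} (hP : Pᵀ = P) (i : Fin d)
    (x : Fin d → ℝ) : pd i (fun y => y ⬝ᵥ P *ᵥ y) x = 2 * (P *ᵥ x) i := by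
  have hterm : ∀ j, pd i (fun y => y j * (P *ᵥ y) j) x =
      x j * P j i + (P *ᵥ x) j * (1 : Matrix (Fin d) (Fin d) ℝ) j i := by
    intro j
    have hcoord : pd i (fun y => y j) x = (1 : Matrix (Fin d) (Fin d) ℝ) j i := by
      simpa using pd_mulVec_apply (1 : Matrix (Fin d) (Fin d) ℝ) i j x
    rw [pd_mul i (by fun_prop) (differentiable_mulVec_apply P j x), pd_mulVec_apply, hcoord]
  have hsum : pd i (fun y => y ⬝ᵥ P *ᵥ y) x = ∑ j, pd i (fun y => y j * (P *ᵥ y) j) x := by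
    simp only [pd, dotProduct]
    rw [fderiv_fun_sum fun j _ => DifferentiableAt.fun_mul (by fun_prop)
      (differentiable_mulVec_apply P j x)]
    simp
  have hcol : ∑ j, x j * P j i = (P *ᵥ x) i := by
    simp only [mulVec, dotProduct]
    refine Finset.sum_congr rfl fun j _ => ?_
    rw [mul_comm, ← transpose_apply P, hP]
  rw [hsum, Finset.sum_congr rfl fun j _ => hterm j, Finset.sum_add_distrib, hcol]
  simp [one_apply]
  ring

variable {c : ℝ} {P : Matrix (Fin d) (Fin d) ℝ} {g : (Fin d → ℝ) → ℝ}

theorem differentiable_gaussian (hg : ∀ y, g y = c * Real.exp (-(1 / 2) * (y ⬝ᵥ P *ᵥ y))) :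
    Differentiable ℝ g := by
  rw [funext hg]
  exact (((differentiable_quadraticForm P).const_mul _).exp).const_mul c

theorem pd_gaussian (hP : Pᵀ = P)
    (hg : ∀ y, g y = c * Real.exp (-(1 / 2) * (y ⬝ᵥ P *ᵥ y))) (i : Fin d) (x : Fin d → ℝ) :
    pd i g x = -(g x * (P *ᵥ x) i) := by
  have hQ := (differentiable_quadraticForm P x).hasFDerivAt
  have h := ((hQ.const_mul (-(1 / 2))).exp).const_mul c
  have hpd := pd_quadraticForm hP i x
  rw [pd] at hpd
  rw [funext hg, pd, h.fderiv]
  simp only [_root_.smul_apply, hpd, smul_eq_mul]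
  ring

/-- The divergence of a Gaussian multiplied by a linear vector field. -/
theorem dvg_gaussian_smul_mulVec (hP : Pᵀ = P)
    (hg : ∀ y, g y = c * Real.exp (-(1 / 2) * (y ⬝ᵥ P *ᵥ y)))
    (M : Matrix (Fin d) (Fin d) ℝ) (x : Fin d → ℝ) :
    dvg (fun y => g y • M *ᵥ y) x = g x * (M.trace - P *ᵥ x ⬝ᵥ M *ᵥ x) := by
  simp only [dvg, Pi.smul_apply, smul_eq_mul, trace, diag_apply, dotProduct,
    ← Finset.sum_sub_distrib, Finset.mul_sum]
  refine Finset.sum_congr rfl fun i _ => ?_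
  rw [pd_mul i (differentiable_gaussian hg x) (differentiable_mulVec_apply M i x),
    pd_mulVec_apply, pd_gaussian hP hg]
  ring

/-- The Hessian of a Gaussian. -/
theorem hess_gaussian (hP : Pᵀ = P)
    (hg : ∀ y, g y = c * Real.exp (-(1 / 2) * (y ⬝ᵥ P *ᵥ y))) (x : Fin d → ℝ) :
    hess g x = g x • (vecMulVec (P *ᵥ x) (P *ᵥ x) - P) := by
  ext i j
  have hneg : pd i (fun y => -(g y * (P *ᵥ y) j)) x = -pd i (fun y => g y * (P *ᵥ y) j) x := by
    simp [pd, fderiv_fun_neg]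
  have hsymm : P j i = P i j := by rw [← transpose_apply P, hP]
  simp only [hess, of_apply, pd_gaussian hP hg, hneg]
  rw [pd_mul i (differentiable_gaussian hg x) (differentiable_mulVec_apply P j x),
    pd_mulVec_apply, pd_gaussian hP hg, hsymm]
  simp [vecMulVec_apply]
  ring

end SpatialDerivatives

/-- Logarithmic derivative in time of a centered Gaussian density with time-dependent
covariance. -/
theorem hasDerivAt_gaussian_covariance {ι : Type*} [Fintype ι] [DecidableEq ι]
    {S : ℝ → Matrix ι ι ℝ} {S' : Matrix ι ι ℝ} {t : ℝ}
    (hS : ∀ i j, HasDerivAt (fun s => S s i j) (S' i j) t) (hdet : 0 < (S t).det)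
    (c : ℝ) (z : ι → ℝ) :
    HasDerivAt
      (fun s => c * (S s).det ^ (-(1 : ℝ) / 2) * Real.exp (-(1 / 2) * (z ⬝ᵥ (S s)⁻¹ *ᵥ z)))
      (c * (S t).det ^ (-(1 : ℝ) / 2) * Real.exp (-(1 / 2) * (z ⬝ᵥ (S t)⁻¹ *ᵥ z)) *
        (-(1 / 2) * ((S t)⁻¹ * S').trace +
          1 / 2 * (z ⬝ᵥ ((S t)⁻¹ * S' * (S t)⁻¹) *ᵥ z))) t := by
  have hd := ((hasDerivAt_matrix_det hS).rpow_const (p := -(1 : ℝ) / 2) (.inl hdet.ne')).const_mul c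
  have hq := (hasDerivAt_dotProduct_mulVec
    (hasDerivAt_matrix_inv_apply hS hdet.ne'.isUnit) z).const_mul (-(1 / 2))
  refine (hd.fun_mul hq.exp).congr_deriv ?_
  have hadj : (S t).adjugate = (S t).det • (S t)⁻¹ := by
    rw [inv_def, smul_smul, Ring.mul_inverse_cancel _ hdet.ne'.isUnit, one_smul]
  rw [hadj, Real.rpow_sub_one hdet.ne', neg_mulVec, dotProduct_neg, Matrix.smul_mul, trace_smul,
    smul_eq_mul]
  field_simp

/-- under the compatibility condition `BR⁻¹Bᵀ = σσᵀ + BR̃Bᵀ`, the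
mean-field Fokker-Planck equation in the LQG case holds with the correction term
identically zero and exploration-noise diffusion matrix `BR̃Bᵀ`. -/
theorem lqg_correction_free_fokker_planck
    (d m k n : ℕ) (T : ℝ) (hT : 0 < T)
    (A : Matrix (Fin d) (Fin d) ℝ) (B : Matrix (Fin d) (Fin m) ℝ)
    (C : Matrix (Fin k) (Fin d) ℝ) (σ : Matrix (Fin d) (Fin n) ℝ)
    (R : Matrix (Fin m) (Fin m) ℝ) (hR : R.PosDef)
    (Rtil : Matrix (Fin m) (Fin m) ℝ) (hRtil : Rtil.PosSemidef)
    (hcomp : B * R⁻¹ * Bᵀ = σ * σᵀ + B * Rtil * Bᵀ)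
    (S S' : ℝ → Matrix (Fin d) (Fin d) ℝ)
    (hSpd : ∀ t ∈ Set.Icc (0 : ℝ) T, (S t).PosDef)
    (hS : ∀ t ∈ Set.Icc (0 : ℝ) T, ∀ i j, HasDerivAt (fun s => S s i j) (S' t i j) t)
    (hS'cont : ∀ i j, ContinuousOn (fun t => S' t i j) (Set.Icc (0 : ℝ) T))
    (hric : ∀ t ∈ Set.Icc (0 : ℝ) T,
      S' t = A * S t + S t * Aᵀ + S t * (Cᵀ * C) * S t - B * R⁻¹ * Bᵀ)
    (ρ : ℝ → (Fin d → ℝ) → ℝ)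
    (hρ : ∀ t z, ρ t z =
      (2 * Real.pi) ^ (-(d : ℝ) / 2) * (S t).det ^ (-(1 : ℝ) / 2) *
        Real.exp (-(1 / 2) * (z ⬝ᵥ (S t)⁻¹.mulVec z))) :
    ∀ t ∈ Set.Icc (0 : ℝ) T, ∀ z,
      deriv (fun s => ρ s z) t =
        -(dvg (fun y => ρ t y •
            (A.mulVec y + (1 / 2 : ℝ) • ((S t * (Cᵀ * C)).mulVec y))) z)
        - (1 / 2) * ((B * Rtil * Bᵀ + σ * σᵀ) * hess (ρ t) z).trace := by
  intro t ht z
  have hdet : 0 < (S t).det := (hSpd t ht).det_pos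
  have hSsymm : (S t)ᵀ = S t := by simpa using (hSpd t ht).isHermitian.eq
  have hPsymm : ((S t)⁻¹)ᵀ = (S t)⁻¹ := by rw [transpose_nonsing_inv, hSsymm]
  have hPS : (S t)⁻¹ * S t = 1 := nonsing_inv_mul _ hdet.ne'.isUnit
  have hSP : S t * (S t)⁻¹ = 1 := mul_nonsing_inv _ hdet.ne'.isUnit
  have htime : deriv (fun s => ρ s z) t = ρ t z * (-(1 / 2) * ((S t)⁻¹ * S' t).trace +
      1 / 2 * (z ⬝ᵥ ((S t)⁻¹ * S' t * (S t)⁻¹) *ᵥ z)) := by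
    simp only [hρ]
    exact (hasDerivAt_gaussian_covariance (hS t ht) hdet _ z).deriv
  set P := (S t)⁻¹
  set M := A + (1 / 2 : ℝ) • (S t * (Cᵀ * C)) with hM
  set D := B * Rtil * Bᵀ + σ * σᵀ with hD
  have hdrift : (fun y => ρ t y • (A *ᵥ y + (1 / 2 : ℝ) • ((S t * (Cᵀ * C)) *ᵥ y))) =
      fun y => ρ t y • M *ᵥ y := by
    simp only [hM, add_mulVec, smul_mulVec]
  have hMt : Mᵀ = Aᵀ + (1 / 2 : ℝ) • (Cᵀ * C * S t) := by
    simp [hM, transpose_mul, hSsymm]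
  have hflow : S' t = M * S t + S t * Mᵀ - D := by
    rw [hric t ht, hcomp, hMt, hM, hD, add_comm (σ * σᵀ)]
    simp only [Matrix.add_mul, Matrix.mul_add, Matrix.smul_mul, Matrix.mul_smul, ← Matrix.mul_assoc]
    module
  have htr : (P * S' t).trace = 2 * M.trace - (D * P).trace := by
    rw [hflow, mul_sub, mul_add, ← mul_assoc P (S t), hPS, one_mul, trace_sub, trace_add,
      trace_transpose, trace_mul_comm P, mul_assoc, hSP, mul_one, trace_mul_comm P]
    ring
  have hquad : z ⬝ᵥ (P * S' t * P) *ᵥ z =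
      2 * (P *ᵥ z ⬝ᵥ M *ᵥ z) - P *ᵥ z ⬝ᵥ D *ᵥ (P *ᵥ z) := by
    have hmove : ∀ w, z ⬝ᵥ P *ᵥ w = P *ᵥ z ⬝ᵥ w := fun w => by
      rw [dotProduct_mulVec, ← mulVec_transpose, hPsymm]
    have hcongr : P * S' t * P = P * M + Mᵀ * P - P * (D * P) := by
      rw [hflow, mul_sub, mul_add, ← mul_assoc P (S t), hPS, one_mul, sub_mul, add_mul,
        mul_assoc P (M * S t), mul_assoc M, hSP, mul_one, mul_assoc P D]
    have htransp : z ⬝ᵥ Mᵀ *ᵥ (P *ᵥ z) = P *ᵥ z ⬝ᵥ M *ᵥ z := by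
      rw [dotProduct_mulVec, vecMul_transpose, dotProduct_comm]
    rw [hcongr, sub_mulVec, add_mulVec, dotProduct_sub, dotProduct_add]
    simp only [← mulVec_mulVec, hmove, htransp]
    ring
  have hdiff : (D * hess (ρ t) z).trace =
      ρ t z * (P *ᵥ z ⬝ᵥ D *ᵥ (P *ᵥ z) - (D * P).trace) := by
    rw [hess_gaussian hPsymm (hρ t), Matrix.mul_smul, trace_smul, mul_sub, trace_sub, mul_vecMulVec,
      trace_vecMulVec, dotProduct_comm, smul_eq_mul]
  rw [htime, hdrift, dvg_gaussian_smul_mulVec hPsymm (hρ t), hdiff, htr, hquad]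
  ring
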